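/- Let ρ and σ be positive definite d×d density matrices, and let (α,z) satisfy either 1 < α ≤ 2 with α/2 ≤ z ≤ α, or 2 ≤ α < ∞ with α−1 ≤ z ≤ α. Then the set { F_{α,z}(ρ, UσU*) : U a d×d unitary matrix } is exactly the closed interval [F_α^C(λ↓(ρ), λ↓(σ)), F_α^C(λ↓(ρ), λ↑(σ))]. -/

import Mathlib

open Matrix
open scoped ComplexOrder

/-- Real power of a (Hermitian) matrix via functional calculus on eigenvalues,
with `(0:ℝ) ^ t = 0` for `t ≠ 0`. Returns `0` on non-Hermitian input. -/
noncomputable def mpow {d : ℕ} (A : Matrix (Fin d) (Fin d) ℂ) (t : ℝ) :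
    Matrix (Fin d) (Fin d) ℂ :=
  if hA : A.IsHermitian then
    (hA.eigenvectorUnitary : Matrix (Fin d) (Fin d) ℂ) *
      Matrix.diagonal (fun i => ((hA.eigenvalues i ^ t : ℝ) : ℂ)) *
      (star (hA.eigenvectorUnitary : Matrix (Fin d) (Fin d) ℂ))
  else 0

/-- The quantum α-z-fidelity
`F_{α,z}(ρ,σ) = (Tr[(σ^{(1-α)/(2z)} ρ^{α/z} σ^{(1-α)/(2z)})^z])^{1/α}`. -/
noncomputable def Faz {d : ℕ} (ρ σ : Matrix (Fin d) (Fin d) ℂ) (α z : ℝ) : ℝ :=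
  ((mpow (mpow σ ((1 - α) / (2 * z)) * mpow ρ (α / z) * mpow σ ((1 - α) / (2 * z))) z).trace.re)
    ^ (1 / α)

/-- The classical α-fidelity `F_α^C(p,q) = (Σ_i p_i^α q_i^{1-α})^{1/α}`. -/
noncomputable def FazC {d : ℕ} (p q : Fin d → ℝ) (α : ℝ) : ℝ :=
  (∑ i, p i ^ α * q i ^ (1 - α)) ^ (1 / α)

/-- The vector `p` rearranged in increasing order. -/
noncomputable def sortUp {d : ℕ} (p : Fin d → ℝ) : Fin d → ℝ :=
  p ∘ Tuple.sort p

/-- The vector `p` rearranged in decreasing order. -/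
noncomputable def sortDown {d : ℕ} (p : Fin d → ℝ) : Fin d → ℝ :=
  fun i => sortUp p i.rev

/-- `λ↑(A)`: the eigenvalues of a Hermitian matrix in increasing order. -/
noncomputable def eigUp {d : ℕ} {A : Matrix (Fin d) (Fin d) ℂ} (hA : A.IsHermitian) :
    Fin d → ℝ := sortUp hA.eigenvalues

/-- `λ↓(A)`: the eigenvalues of a Hermitian matrix in decreasing order. -/
noncomputable def eigDown {d : ℕ} {A : Matrix (Fin d) (Fin d) ℂ} (hA : A.IsHermitian) :
    Fin d → ℝ := sortDown hA.eigenvalues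

/-!
Since `F(ρ, U σ U*) = F(U* ρ U, σ)`, it suffices to study `X ↦ tr (D X D) ^ z` with `D` a power of
`σ` and `X` running through the unitary orbit of a power of `ρ`. The orbit is compact and path
connected, so the range is a compact interval, whose endpoints are values at global extrema.
At an extremum the derivative along `t ↦ exp (t K) X exp (-t K)` vanishes for every skew-Hermitian
`K`. Choosing `K = [X, P]`, where `P = z D (D X D) ^ (z - 1) D` is the gradient, shows that `X`
commutes with `P`, and this forces `X` to commute with `D`. For commuting arguments the trace
collapses to `tr (ρ' ^ α σ ^ (1 - α))`, with `ρ'` in the orbit of `ρ`; by Birkhoff's theorem and the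
rearrangement inequality, it lies between the two classical sums over sorted eigenvalues. Both
sums are attained on the orbit by matching eigenbases.
-/

section Overlap

variable {n 𝕜 : Type*} [Fintype n] [DecidableEq n] [RCLike 𝕜]

theorem normSq_entries_mem_doublyStochastic {U : Matrix n n 𝕜} (hU : U ∈ unitaryGroup n 𝕜) :
    Matrix.of (fun i j => ‖U i j‖ ^ 2) ∈ doublyStochastic ℝ n := by
  have row_sum {V : Matrix n n 𝕜} (hV : V * star V = 1) (i : n) : ∑ j, ‖V i j‖ ^ 2 = 1 := by
    have h := congr_fun₂ hV i i
    simp only [mul_apply, star_apply, RCLike.star_def, RCLike.mul_conj, one_apply_eq] at h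
    exact_mod_cast h
  refine mem_doublyStochastic_iff_sum.mpr ⟨fun i j => sq_nonneg _,
    row_sum (mem_unitaryGroup_iff.mp hU), fun j => ?_⟩
  simpa using row_sum (V := star U) (by simpa using mem_unitaryGroup_iff'.mp hU) j

/-- The squared absolute inner products `|⟨uᵢ, vⱼ⟩|²` of the chosen eigenbases `u` of `A` and
`v` of `B`: the weights through which traces of products of functions of `A` and of `B` are
expressed by eigenvalues. -/
noncomputable def eigenOverlap {A B : Matrix n n 𝕜} (hA : A.IsHermitian) (hB : B.IsHermitian) :
    Matrix n n ℝ :=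
  .of fun i j => ‖(star hA.eigenvectorUnitary * hB.eigenvectorUnitary : unitaryGroup n 𝕜).1 i j‖ ^ 2

variable {A B : Matrix n n 𝕜}

theorem eigenOverlap_mem_doublyStochastic (hA : A.IsHermitian) (hB : B.IsHermitian) :
    eigenOverlap hA hB ∈ doublyStochastic ℝ n :=
  normSq_entries_mem_doublyStochastic (star hA.eigenvectorUnitary * hB.eigenvectorUnitary).2

theorem re_trace_cfc_mul_cfc (hA : A.IsHermitian) (hB : B.IsHermitian) (f g : ℝ → ℝ) :
    RCLike.re (cfc f A * cfc g B).trace =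
      ∑ i, ∑ j, f (hA.eigenvalues i) * g (hB.eigenvalues j) * eigenOverlap hA hB i j := by
  have cyclic (U V D E : Matrix n n 𝕜) :
      (U * D * star U * (V * E * star V)).trace =
        (D * (star U * V) * E * star (star U * V)).trace := by
    rw [mul_assoc, mul_assoc, trace_mul_comm]
    simp only [star_mul, star_star, mul_assoc]
  rw [hA.cfc_eq, hB.cfc_eq, IsHermitian.cfc, IsHermitian.cfc, Unitary.conjStarAlgAut_apply,
    Unitary.conjStarAlgAut_apply, cyclic, trace, map_sum]
  refine Finset.sum_congr rfl fun i _ => ?_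
  rw [diag_apply, mul_apply, map_sum]
  refine Finset.sum_congr rfl fun j _ => ?_
  simp only [mul_diagonal, diagonal_mul, star_apply, Function.comp_apply, RCLike.star_def,
    mul_right_comm _ _ ((starRingEnd 𝕜) _), mul_assoc _ ((starRingEnd 𝕜) _), RCLike.conj_mul]
  norm_cast
  exact mul_right_comm _ _ _

theorem re_trace_cfc_sub_sub (hA : A.IsHermitian) (hB : B.IsHermitian) (f f' : ℝ → ℝ) :
    RCLike.re (cfc f B).trace - RCLike.re (cfc f A).trace - RCLike.re (cfc f' A * (B - A)).trace =
      ∑ i, ∑ j, (f (hB.eigenvalues j) - f (hA.eigenvalues i) -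
        f' (hA.eigenvalues i) * (hB.eigenvalues j - hA.eigenvalues i)) *
          eigenOverlap hA hB i j := by
  have hA' : IsSelfAdjoint A := hA
  have hB' : IsSelfAdjoint B := hB
  have trace_right : RCLike.re (cfc f B).trace =
      ∑ i, ∑ j, f (hB.eigenvalues j) * eigenOverlap hA hB i j := by
    simpa [cfc_const_one ℝ A] using re_trace_cfc_mul_cfc hA hB (fun _ => 1) f
  have trace_left (u : ℝ → ℝ) : RCLike.re (cfc u A).trace =
      ∑ i, ∑ j, u (hA.eigenvalues i) * eigenOverlap hA hB i j := by
    simpa [cfc_const_one ℝ B] using re_trace_cfc_mul_cfc hA hB u (fun _ => 1)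
  have trace_mul_right : RCLike.re (cfc f' A * B).trace =
      ∑ i, ∑ j, f' (hA.eigenvalues i) * hB.eigenvalues j * eigenOverlap hA hB i j := by
    simpa [cfc_id ℝ B] using re_trace_cfc_mul_cfc hA hB f' id
  have trace_mul_left : RCLike.re (cfc f' A * A).trace =
      ∑ i, ∑ j, f' (hA.eigenvalues i) * hA.eigenvalues i * eigenOverlap hA hB i j := by
    have h := trace_left (fun x => f' x * x)
    rwa [cfc_mul f' (fun x => x) A (A.finite_real_spectrum.continuousOn f'), cfc_id' ℝ A] at h
  rw [mul_sub, trace_sub, map_sub, trace_right, trace_left, trace_mul_right, trace_mul_left]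
  simp only [← Finset.sum_sub_distrib]
  exact Fintype.sum_congr _ _ fun i => Fintype.sum_congr _ _ fun j => by ring

theorem re_trace_sub_mul_sub (hA : A.IsHermitian) (hB : B.IsHermitian) :
    RCLike.re ((B - A) * (B - A)).trace =
      ∑ i, ∑ j, (hB.eigenvalues j - hA.eigenvalues i) ^ 2 * eigenOverlap hA hB i j := by
  have hA' : IsSelfAdjoint A := hA
  have hB' : IsSelfAdjoint B := hB
  calc RCLike.re ((B - A) * (B - A)).trace
      = RCLike.re (cfc (fun x : ℝ => x ^ 2) B).trace -
          RCLike.re (cfc (fun x : ℝ => x ^ 2) A).trace -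
            RCLike.re (cfc (fun x : ℝ => 2 * x) A * (B - A)).trace := by
        rw [cfc_pow_id B 2, cfc_pow_id A 2, cfc_const_mul_id 2 A, sq, sq, smul_mul_assoc, two_smul,
          mul_sub, sub_mul, sub_mul, mul_sub]
        simp only [trace_sub, trace_add, map_sub, map_add, trace_mul_comm B A]
        ring
    _ = _ := by
        rw [re_trace_cfc_sub_sub hA hB]
        exact Fintype.sum_congr _ _ fun i => Fintype.sum_congr _ _ fun j => by ring

theorem abs_re_trace_cfc_sub_sub_le (hA : A.IsHermitian) (hB : B.IsHermitian) {f f' : ℝ → ℝ} {C : ℝ}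
    (h : ∀ x ∈ spectrum ℝ A, ∀ y ∈ spectrum ℝ B, |f y - f x - f' x * (y - x)| ≤ C * (y - x) ^ 2) :
    |RCLike.re (cfc f B).trace - RCLike.re (cfc f A).trace - RCLike.re (cfc f' A * (B - A)).trace| ≤
      C * RCLike.re ((B - A) * (B - A)).trace := by
  have overlap_nonneg (i j : n) : 0 ≤ eigenOverlap hA hB i j :=
    nonneg_of_mem_doublyStochastic (eigenOverlap_mem_doublyStochastic hA hB)
  rw [re_trace_cfc_sub_sub hA hB, re_trace_sub_mul_sub hA hB]
  simp only [Finset.mul_sum, ← mul_assoc]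
  refine (Finset.abs_sum_le_sum_abs _ _).trans (Finset.sum_le_sum fun i _ => ?_)
  refine (Finset.abs_sum_le_sum_abs _ _).trans (Finset.sum_le_sum fun j _ => ?_)
  rw [abs_mul, abs_of_nonneg (overlap_nonneg i j)]
  exact mul_le_mul_of_nonneg_right
    (h _ (hA.eigenvalues_mem_spectrum_real i) _ (hB.eigenvalues_mem_spectrum_real j))
    (overlap_nonneg i j)

end Overlap

section UnitaryOrbit

variable {n 𝕜 : Type*} [Fintype n] [DecidableEq n] [RCLike 𝕜]

/-- The orbit `{U A U* | U unitary}` of a matrix under unitary conjugation. -/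
def unitaryOrbit (A : Matrix n n 𝕜) : Set (Matrix n n 𝕜) :=
  Set.range fun U : unitaryGroup n 𝕜 => Unitary.conjStarAlgAut 𝕜 _ U A

variable {A C : Matrix n n 𝕜}

theorem conj_mem_unitaryOrbit (A : Matrix n n 𝕜) (U : unitaryGroup n 𝕜) :
    Unitary.conjStarAlgAut 𝕜 _ U A ∈ unitaryOrbit A :=
  Set.mem_range_self U

theorem mem_unitaryOrbit_self (A : Matrix n n 𝕜) : A ∈ unitaryOrbit A := by
  simpa using conj_mem_unitaryOrbit A 1

theorem unitaryOrbit_eq_of_mem (hC : C ∈ unitaryOrbit A) : unitaryOrbit C = unitaryOrbit A := by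
  obtain ⟨U, rfl⟩ := hC
  refine Set.Subset.antisymm ?_ ?_ <;> rintro _ ⟨V, rfl⟩
  · exact ⟨V * U, by simp only [map_mul, StarAlgEquiv.mul_apply]⟩
  · exact ⟨V * U⁻¹, by simp only [← StarAlgEquiv.mul_apply, ← map_mul, inv_mul_cancel_right]⟩

theorem isHermitian_of_mem_unitaryOrbit (hA : A.IsHermitian) (hC : C ∈ unitaryOrbit A) :
    C.IsHermitian := by
  obtain ⟨U, rfl⟩ := hC
  exact isHermitian_mul_mul_conjTranspose _ hA

theorem posDef_of_mem_unitaryOrbit (hA : A.PosDef) (hC : C ∈ unitaryOrbit A) : C.PosDef := by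
  obtain ⟨U, rfl⟩ := hC
  exact (Matrix.IsUnit.posDef_star_right_conjugate_iff (Unitary.toUnits U).isUnit).mpr hA

theorem trace_conjStarAlgAut (U : unitaryGroup n 𝕜) (A : Matrix n n 𝕜) :
    (Unitary.conjStarAlgAut 𝕜 _ U A).trace = A.trace := by
  rw [Unitary.conjStarAlgAut_apply, trace_mul_comm, ← mul_assoc, Unitary.coe_star_mul_self, one_mul]

theorem cfc_conjStarAlgAut (f : ℝ → ℝ) (hA : A.IsHermitian) (U : unitaryGroup n 𝕜) :
    cfc f (Unitary.conjStarAlgAut 𝕜 _ U A) = Unitary.conjStarAlgAut 𝕜 _ U (cfc f A) := by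
  have hA' : IsSelfAdjoint A := hA
  have hU : Continuous fun X : Matrix n n 𝕜 => U.1 * X * star U.1 := by fun_prop
  exact (StarAlgHomClass.map_cfc (Unitary.conjStarAlgAut 𝕜 _ U) f A
    (A.finite_real_spectrum.continuousOn f) hU).symm

theorem image_cfc_unitaryOrbit (f : ℝ → ℝ) (hA : A.IsHermitian) :
    cfc f '' unitaryOrbit A = unitaryOrbit (cfc f A) := by
  rw [unitaryOrbit, ← Set.range_comp]
  exact congrArg Set.range (funext fun U => cfc_conjStarAlgAut f hA U)

theorem eigenvalues_eq_of_mem_unitaryOrbit (hA : A.IsHermitian) (hC : C.IsHermitian)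
    (h : C ∈ unitaryOrbit A) : hC.eigenvalues = hA.eigenvalues := by
  obtain ⟨U, hU : Unitary.conjStarAlgAut 𝕜 _ U A = C⟩ := h
  rw [IsHermitian.eigenvalues_eq_eigenvalues_iff, ← hU, Unitary.conjStarAlgAut_apply,
    charpoly_mul_comm, ← mul_assoc, Unitary.coe_star_mul_self, one_mul]

end UnitaryOrbit

section VonNeumann

variable {n : Type*} [Fintype n] [DecidableEq n]

theorem sum_sum_mul_le_of_monovary {w : Matrix n n ℝ} (hw : w ∈ doublyStochastic ℝ n)
    {a b : n → ℝ} (h : Monovary a b) :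
    ∑ i, ∑ j, a i * b j * w i j ≤ ∑ i, a i * b i := by
  obtain ⟨c, hc, hc1, rfl⟩ := exists_eq_sum_perm_of_mem_doublyStochastic hw
  have perm_entry (σ : Equiv.Perm n) :
      ∑ i, ∑ j, a i * b j * σ.permMatrix ℝ i j = ∑ i, a i * b (σ i) := by
    simp [Equiv.Perm.permMatrix, PEquiv.toMatrix_apply]
  calc ∑ i, ∑ j, a i * b j * (∑ σ, c σ • σ.permMatrix ℝ) i j
      = ∑ σ, c σ * ∑ i, ∑ j, a i * b j * σ.permMatrix ℝ i j := by
        simp only [Matrix.sum_apply, Matrix.smul_apply, smul_eq_mul, Finset.mul_sum,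
          mul_left_comm (c _), Finset.sum_comm (γ := Equiv.Perm n)]
    _ ≤ ∑ σ, c σ * ∑ i, a i * b i := by
        refine Finset.sum_le_sum fun σ _ => mul_le_mul_of_nonneg_left ?_ (hc σ)
        exact (perm_entry σ).trans_le h.sum_mul_comp_perm_le_sum_mul
    _ = ∑ i, a i * b i := by rw [← Finset.sum_mul, hc1, one_mul]

theorem sum_sum_mul_le_of_monovary_comp_perm {w : Matrix n n ℝ} (hw : w ∈ doublyStochastic ℝ n)
    {a b : n → ℝ} (e e' : Equiv.Perm n) (h : Monovary (a ∘ e) (b ∘ e')) :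
    ∑ i, ∑ j, a i * b j * w i j ≤ ∑ i, a (e i) * b (e' i) := by
  refine le_trans (le_of_eq ?_)
    (sum_sum_mul_le_of_monovary (reindex_mem_doublyStochastic (e₁ := e.symm) (e₂ := e'.symm) hw) h)
  rw [← Equiv.sum_comp e]
  exact Fintype.sum_congr _ _ fun i => (Equiv.sum_comp e' _).symm

variable {𝕜 : Type*} [RCLike 𝕜] {A B : Matrix n n 𝕜}

theorem re_trace_cfc_mul_cfc_le_of_monovary (hA : A.IsHermitian) (hB : B.IsHermitian)
    {f g : ℝ → ℝ} (e e' : Equiv.Perm n)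
    (h : Monovary (f ∘ hA.eigenvalues ∘ e) (g ∘ hB.eigenvalues ∘ e')) :
    RCLike.re (cfc f A * cfc g B).trace ≤
      ∑ i, f (hA.eigenvalues (e i)) * g (hB.eigenvalues (e' i)) := by
  rw [re_trace_cfc_mul_cfc hA hB]
  exact sum_sum_mul_le_of_monovary_comp_perm (eigenOverlap_mem_doublyStochastic hA hB) e e' h

theorem le_re_trace_cfc_mul_cfc_of_antivary (hA : A.IsHermitian) (hB : B.IsHermitian)
    {f g : ℝ → ℝ} (e e' : Equiv.Perm n)
    (h : Antivary (f ∘ hA.eigenvalues ∘ e) (g ∘ hB.eigenvalues ∘ e')) :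
    ∑ i, f (hA.eigenvalues (e i)) * g (hB.eigenvalues (e' i)) ≤
      RCLike.re (cfc f A * cfc g B).trace := by
  simpa [cfc_neg] using
    re_trace_cfc_mul_cfc_le_of_monovary hA hB (g := fun x => -g x) e e' h.neg_right

/-- The unitary whose `i`-th column is the `e i`-th vector of the chosen eigenbasis of `A`. -/
noncomputable def permutedEigenbasis (hA : A.IsHermitian) (e : Equiv.Perm n) :
    unitaryGroup n 𝕜 :=
  ⟨(hA.eigenvectorUnitary : Matrix n n 𝕜).submatrix id e, by
    rw [mem_unitaryGroup_iff, star_eq_conjTranspose, conjTranspose_submatrix,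
      submatrix_mul_equiv, submatrix_id_id]
    exact mem_unitaryGroup_iff.mp hA.eigenvectorUnitary.2⟩

theorem cfc_eq_conjStarAlgAut_diagonal (hA : A.IsHermitian) (e : Equiv.Perm n) (f : ℝ → ℝ) :
    cfc f A = Unitary.conjStarAlgAut 𝕜 _ (permutedEigenbasis hA e)
      (diagonal fun i => (f (hA.eigenvalues (e i)) : 𝕜)) := by
  let U : Matrix n n 𝕜 := hA.eigenvectorUnitary.1
  let D : Matrix n n 𝕜 := diagonal (RCLike.ofReal ∘ f ∘ hA.eigenvalues)
  calc cfc f A = (U * D * star U).submatrix id id := by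
        rw [hA.cfc_eq, IsHermitian.cfc, Unitary.conjStarAlgAut_apply, submatrix_id_id]
    _ = U.submatrix id e * D.submatrix e e * star (U.submatrix id e) := by
        rw [star_eq_conjTranspose, star_eq_conjTranspose, conjTranspose_submatrix,
          submatrix_mul_equiv, submatrix_mul_equiv]
    _ = _ := by rw [submatrix_diagonal_equiv]; rfl

theorem exists_commute_re_trace_cfc_mul_cfc_eq (hA : A.IsHermitian) (hB : B.IsHermitian)
    (e e' : Equiv.Perm n) :
    ∃ C ∈ unitaryOrbit A, Commute C B ∧ ∀ f g : ℝ → ℝ, RCLike.re (cfc f C * cfc g B).trace =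
      ∑ i, f (hA.eigenvalues (e i)) * g (hB.eigenvalues (e' i)) := by
  let V := permutedEigenbasis hA e
  let W := permutedEigenbasis hB e'
  let C := Unitary.conjStarAlgAut 𝕜 _ (W * V⁻¹) A
  have hC : C ∈ unitaryOrbit A := conj_mem_unitaryOrbit A _
  have cfc_C (f : ℝ → ℝ) : cfc f C =
      Unitary.conjStarAlgAut 𝕜 _ W (diagonal fun i => (f (hA.eigenvalues (e i)) : 𝕜)) := by
    rw [cfc_conjStarAlgAut f hA, cfc_eq_conjStarAlgAut_diagonal hA e, ← StarAlgEquiv.mul_apply,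
      ← map_mul, inv_mul_cancel_right]
  have cfc_B := cfc_eq_conjStarAlgAut_diagonal hB e'
  refine ⟨C, hC, ?_, fun f g => ?_⟩
  · have hC' : IsSelfAdjoint C := isHermitian_of_mem_unitaryOrbit hA hC
    have hB' : IsSelfAdjoint B := hB
    rw [← cfc_id ℝ C, ← cfc_id ℝ B, cfc_C, cfc_B]
    exact (Matrix.commute_diagonal _ _).map _
  · rw [cfc_C, cfc_B, ← map_mul, trace_conjStarAlgAut, diagonal_mul_diagonal, trace_diagonal]
    simp

end VonNeumann

section TraceDerivative

open Filter Topology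
open scoped Matrix.Norms.L2Operator

theorem exists_abs_sub_sub_deriv_mul_le {f : ℝ → ℝ} {s K : Set ℝ} (hs : IsOpen s)
    (hf : ContDiffOn ℝ 2 f s) (hK : IsCompact K) (hKc : Convex ℝ K) (hKs : K ⊆ s) :
    ∃ C, ∀ x ∈ K, ∀ y ∈ K, |f y - f x - deriv f x * (y - x)| ≤ C * (y - x) ^ 2 := by
  have hf' : ContDiffOn ℝ 1 (deriv f) s := hf.deriv_of_isOpen hs (by norm_num)
  obtain ⟨C, hC⟩ := (hf'.mono hKs).exists_lipschitzOnWith one_ne_zero hKc hK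
  refine ⟨C, fun x hx y hy => ?_⟩
  have hseg : segment ℝ x y ⊆ K := hKc.segment_subset hx hy
  have hderiv : ∀ u ∈ segment ℝ x y, HasDerivWithinAt (fun u => f u - deriv f x * u)
      (deriv f u - deriv f x) (segment ℝ x y) u := fun u hu => by
    have hdiff := (hf.contDiffAt (hs.mem_nhds (hKs (hseg hu)))).differentiableAt two_ne_zero
    simpa using (hdiff.hasDerivAt.fun_sub ((hasDerivAt_id' u).const_mul _)).hasDerivWithinAt
  have hbound : ∀ u ∈ segment ℝ x y, ‖deriv f u - deriv f x‖ ≤ C * |y - x| := fun u hu =>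
    (hC.norm_sub_le (hseg hu) hx).trans <| by
      gcongr
      exact norm_sub_le_of_mem_segment hu
  calc |f y - f x - deriv f x * (y - x)|
      = ‖(f y - deriv f x * y) - (f x - deriv f x * x)‖ := by
        rw [Real.norm_eq_abs]; congr 1; ring
    _ ≤ C * |y - x| * ‖y - x‖ := (convex_segment x y).norm_image_sub_le_of_norm_hasDerivWithin_le
        hderiv hbound (left_mem_segment ℝ x y) (right_mem_segment ℝ x y)
    _ = C * (y - x) ^ 2 := by rw [Real.norm_eq_abs, mul_assoc, abs_mul_abs_self, sq]

variable {n : Type*} [Fintype n] [DecidableEq n]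

/-- The real linear functional `H ↦ re tr (P H)`. Derivatives of real functions of a Hermitian
matrix are written in this form, with `P` playing the role of the gradient. -/
noncomputable def reTraceMul (P : Matrix n n ℂ) : Matrix n n ℂ →L[ℝ] ℝ :=
  LinearMap.toContinuousLinearMap
    (Complex.reLm ∘ₗ (traceLinearMap n ℂ ℂ ∘ₗ LinearMap.mulLeft ℂ P).restrictScalars ℝ)

theorem reTraceMul_apply (P H : Matrix n n ℂ) : reTraceMul P H = (P * H).trace.re := rfl

theorem abs_re_trace_mul_self_le (H : Matrix n n ℂ) :
    |(H * H).trace.re| ≤ ‖reTraceMul (1 : Matrix n n ℂ)‖ * ‖H‖ ^ 2 := by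
  calc |(H * H).trace.re| = ‖reTraceMul (1 : Matrix n n ℂ) (H * H)‖ := by
        rw [reTraceMul_apply, one_mul, Real.norm_eq_abs]
    _ ≤ ‖reTraceMul (1 : Matrix n n ℂ)‖ * ‖H * H‖ := (reTraceMul (1 : Matrix n n ℂ)).le_opNorm _
    _ ≤ ‖reTraceMul (1 : Matrix n n ℂ)‖ * ‖H‖ ^ 2 := by
        rw [sq]
        gcongr
        exact norm_mul_le H H

theorem hasFDerivWithinAt_re_trace_cfc {f : ℝ → ℝ} {s : Set ℝ} (hs : IsOpen s) (hsc : Convex ℝ s)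
    (hf : ContDiffOn ℝ 2 f s) {A : Matrix n n ℂ} (hA : A.IsHermitian) (hAs : spectrum ℝ A ⊆ s) :
    HasFDerivWithinAt (fun B => (cfc f B).trace.re) (reTraceMul (cfc (deriv f) A))
      {B | B.IsHermitian} A := by
  have hcompact : IsCompact (convexHull ℝ (spectrum ℝ A)) :=
    A.finite_real_spectrum.isCompact_convexHull ℝ
  obtain ⟨δ, hδ, hKs⟩ := hcompact.exists_cthickening_subset_open hs (convexHull_min hAs hsc)
  set K := Metric.cthickening δ (convexHull ℝ (spectrum ℝ A))
  obtain ⟨C, hC⟩ := exists_abs_sub_sub_deriv_mul_le hs hf hcompact.cthickening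
    ((convex_convexHull ℝ _).cthickening δ) hKs
  have hKA : K ∈ 𝓝ˢ (spectrum ℝ A) :=
    nhdsSet_mono (subset_convexHull ℝ _) (Metric.cthickening_mem_nhdsSet _ hδ)
  have hKB : ∀ᶠ B in 𝓝 A, spectrum ℝ B ⊆ K :=
    ((upperHemicontinuous_spectrum ℝ (Matrix n n ℂ)) A K hKA).mono fun _ => subset_of_mem_nhdsSet
  have hO : (fun B => (cfc f B).trace.re - (cfc f A).trace.re -
      reTraceMul (cfc (deriv f) A) (B - A)) =O[𝓝[{B | B.IsHermitian}] A] fun B => ‖B - A‖ ^ 2 := by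
    refine .of_bound (|C| * ‖reTraceMul (1 : Matrix n n ℂ)‖) ?_
    filter_upwards [self_mem_nhdsWithin, nhdsWithin_le_nhds hKB] with B hB hBK
    rw [reTraceMul_apply, Real.norm_eq_abs, norm_pow, norm_norm, mul_assoc]
    calc _ ≤ C * ((B - A) * (B - A)).trace.re :=
          abs_re_trace_cfc_sub_sub_le hA hB fun x hx y hy =>
            hC x (subset_of_mem_nhdsSet hKA hx) y (hBK hy)
      _ ≤ |C| * |((B - A) * (B - A)).trace.re| := (le_abs_self _).trans (abs_mul _ _).le
      _ ≤ _ := by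
          gcongr
          exact abs_re_trace_mul_self_le _
  refine .of_isLittleO (hO.trans_isLittleO ?_)
  exact (Asymptotics.isLittleO_pow_sub_sub A one_lt_two).mono nhdsWithin_le_nhds

end TraceDerivative

section OrbitTopology

open Filter Topology
open scoped Matrix.Norms.L2Operator

theorem lie_mem_skewAdjoint {R : Type*} [NonUnitalRing R] [StarRing R] {a b : R}
    (ha : IsSelfAdjoint a) (hb : IsSelfAdjoint b) : ⁅a, b⁆ ∈ skewAdjoint R := by
  simp only [skewAdjoint.mem_iff, Ring.lie_def, star_sub, star_mul, ha.star_eq, hb.star_eq, neg_sub]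

variable {n : Type*} [Fintype n]

theorem commute_of_re_trace_mul_lie_lie_eq_zero {A P : Matrix n n ℂ} (hA : A.IsHermitian)
    (hP : P.IsHermitian) (h : (P * ⁅⁅A, P⁆, A⁆).trace.re = 0) : Commute A P := by
  let X := ⁅A, P⁆
  have hX : star X = -X := lie_mem_skewAdjoint hA hP
  have htrace : (P * ⁅X, A⁆).trace = -(star X * X).trace := by
    rw [hX, neg_mul, trace_neg, neg_neg, Ring.lie_def X A, mul_sub, trace_sub, ← mul_assoc,
      trace_mul_comm _ A, ← mul_assoc, ← mul_assoc, ← trace_sub, ← sub_mul,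
      ← Ring.lie_def]
  have hnonneg : 0 ≤ (star X * X).trace := (posSemidef_conjTranspose_mul_self X).trace_nonneg
  have hzero : (star X * X).trace = 0 := by
    rw [htrace, Complex.neg_re, neg_eq_zero] at h
    exact Complex.ext h (Complex.nonneg_iff.mp hnonneg).2.symm
  exact sub_eq_zero.mp (trace_conjTranspose_mul_self_eq_zero_iff.mp hzero)

variable [DecidableEq n]

theorem isCompact_unitaryGroup : IsCompact (unitaryGroup n ℂ : Set (Matrix n n ℂ)) := by
  have : ProperSpace (Matrix n n ℂ) := FiniteDimensional.proper ℂ _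
  refine Metric.isCompact_of_isClosed_isBounded isClosed_unitary
    ((Metric.isBounded_closedBall (x := (0 : Matrix n n ℂ)) (r := 1)).subset fun U hU => ?_)
  rw [mem_closedBall_zero_iff]
  nontriviality Matrix n n ℂ
  exact (CStarRing.norm_of_mem_unitary hU).le

theorem exists_neg_one_notMem_spectrum_smul (U V : Matrix n n ℂ) :
    ∃ c : unitary ℂ, -1 ∉ spectrum ℂ (c • U) ∧ -1 ∉ spectrum ℂ (c • V) := by
  have hcircle : (Metric.sphere (0 : ℂ) 1).Infinite :=
    (isPreconnected_sphere (by simp [Complex.rank_real_complex]) 0 1).infinite_of_nontrivial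
      ⟨1, by simp, -1, by simp, by norm_num⟩
  obtain ⟨w, hw, hwUV⟩ :=
    (hcircle.sdiff ((Matrix.finite_spectrum U).union (Matrix.finite_spectrum V))).nonempty
  rw [mem_sphere_zero_iff_norm] at hw
  let c : unitary ℂ :=
    ⟨-star w, by simp [Unitary.mem_iff, Complex.conj_mul', Complex.mul_conj', hw]⟩
  have hcw : Unitary.toUnits c • w = -1 := by
    change -star w * w = -1
    simp [Complex.conj_mul', hw]
  have key (W : Matrix n n ℂ) (hW : w ∉ spectrum ℂ W) : -1 ∉ spectrum ℂ (c • W) := by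
    rw [← hcw]
    exact spectrum.smul_mem_smul_iff.not.mpr hW
  exact ⟨c, key U fun h => hwUV (.inl h), key V fun h => hwUV (.inr h)⟩

-- A unitary without eigenvalue `-1` is joined to `1` by its logarithm. A common phase `c` removes
-- `-1` from the spectra of both `U` and `1`, and `1 ⇝ c • U ⇝ U`, the second path multiplying
-- one from `c • 1` to `1` by `U`.
theorem joined_one_unitaryGroup (U : unitaryGroup n ℂ) : Joined 1 U := by
  have joined_one (V : unitaryGroup n ℂ) (hV : -1 ∉ spectrum ℂ V.1) : Joined 1 V :=
    Unitary.joined 1 V ((Unitary.norm_sub_one_lt_two_iff V.2).mpr hV)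
  obtain ⟨c, hcU, hc1⟩ := exists_neg_one_notMem_spectrum_smul U.1 1
  have hcU_eq : c • (1 : unitaryGroup n ℂ) * U = c • U :=
    Subtype.ext (smul_one_mul (c : ℂ) U.1)
  have hU : Joined (1 * U) (c • (1 : unitaryGroup n ℂ) * U) :=
    (joined_one (c • 1) hc1).map (continuous_mul_const U)
  rw [one_mul, hcU_eq] at hU
  exact (joined_one (c • U) hcU).trans hU.symm

theorem continuous_conjStarAlgAut (A : Matrix n n ℂ) :
    Continuous fun U : unitaryGroup n ℂ => Unitary.conjStarAlgAut ℂ _ U A := by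
  simp only [Unitary.conjStarAlgAut_apply]
  fun_prop

theorem isCompact_unitaryOrbit (A : Matrix n n ℂ) : IsCompact (unitaryOrbit A) :=
  have : CompactSpace (unitaryGroup n ℂ) := isCompact_iff_compactSpace.mp isCompact_unitaryGroup
  isCompact_range (continuous_conjStarAlgAut A)

theorem isPathConnected_unitaryOrbit (A : Matrix n n ℂ) : IsPathConnected (unitaryOrbit A) :=
  have : PathConnectedSpace (unitaryGroup n ℂ) :=
    ⟨⟨1⟩, fun U V => (joined_one_unitaryGroup U).symm.trans (joined_one_unitaryGroup V)⟩
  isPathConnected_range (continuous_conjStarAlgAut A)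

theorem hasDerivAt_exp_smul_mul_mul_star {X : Matrix n n ℂ} (hX : X ∈ skewAdjoint (Matrix n n ℂ))
    (A : Matrix n n ℂ) :
    HasDerivAt (fun t : ℝ => NormedSpace.exp (t • X) * A * star (NormedSpace.exp (t • X)))
      ⁅X, A⁆ 0 := by
  have hexp := hasDerivAt_exp_smul_const X (0 : ℝ)
  simp only [zero_smul, NormedSpace.exp_zero, one_mul] at hexp
  simpa [skewAdjoint.mem_iff.mp hX, Ring.lie_def, sub_eq_add_neg] using!
    (hexp.mul_const A).mul hexp.star

theorem commute_of_isExtrOn_unitaryOrbit {A P : Matrix n n ℂ} (hA : A.IsHermitian)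
    (hP : P.IsHermitian) {G : Matrix n n ℂ → ℝ}
    (hG : HasFDerivWithinAt G (reTraceMul P) (unitaryOrbit A) A)
    (hext : IsExtrOn G (unitaryOrbit A) A) : Commute A P := by
  let : NormedAlgebra ℚ (Matrix n n ℂ) := .restrictScalars ℚ ℂ _
  have hX := lie_mem_skewAdjoint hA hP
  let c (t : ℝ) : Matrix n n ℂ :=
    NormedSpace.exp (t • ⁅A, P⁆) * A * star (NormedSpace.exp (t • ⁅A, P⁆))
  have hc0 : c 0 = A := by simp [c]
  have hc : ∀ t, c t ∈ unitaryOrbit A := fun t => conj_mem_unitaryOrbit A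
    ⟨_, NormedSpace.exp_mem_unitary_of_mem_skewAdjoint (skewAdjoint.smul_mem t hX)⟩
  have hderiv : HasDerivAt (G ∘ c) (reTraceMul P ⁅⁅A, P⁆, A⁆) 0 :=
    (hc0.symm ▸ hG : HasFDerivWithinAt G _ _ (c 0)).comp_hasDerivAt 0
      (hasDerivAt_exp_smul_mul_mul_star hX A) (.of_forall hc)
  have hext' : IsExtrFilter (G ∘ c) (𝓟 Set.univ) 0 := hext.comp_mapsTo (fun t _ => hc t) hc0
  exact commute_of_re_trace_mul_lie_lie_eq_zero hA hP
    (IsLocalExtr.hasDerivAt_eq_zero (hext'.filter_mono (by simp)) hderiv)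

end OrbitTopology

section StrictlyPositive

variable {R : Type*} [CStarAlgebra R] [PartialOrder R] [StarOrderedRing R] {a b : R}

theorem log_rpow_of_isStrictlyPositive (ha : IsStrictlyPositive a) (t : ℝ) :
    CFC.log (a ^ t) = t • CFC.log a := by
  have hne : ∀ x ∈ spectrum ℝ a, x ≠ 0 := fun x hx => (ha.spectrum_pos hx).ne'
  have hrpow : ContinuousOn (fun x : ℝ => x ^ t) (spectrum ℝ a) :=
    continuousOn_id.rpow_const fun x hx => .inl (hne x hx)
  have hlog : ContinuousOn Real.log ((fun x : ℝ => x ^ t) '' spectrum ℝ a) := by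
    refine Real.continuousOn_log.mono ?_
    rintro _ ⟨x, hx, rfl⟩
    exact (Real.rpow_pos_of_pos (ha.spectrum_pos hx) t).ne'
  rw [CFC.rpow_eq_cfc_real, CFC.log, CFC.log, ← cfc_comp' Real.log (fun x => x ^ t) a hlog hrpow,
    ← cfc_const_mul t Real.log a (Real.continuousOn_log.mono hne)]
  exact cfc_congr fun x hx => Real.log_rpow (ha.spectrum_pos hx) t

theorem rpow_eq_exp_smul_log (ha : IsStrictlyPositive a) (t : ℝ) :
    a ^ t = NormedSpace.exp (t • CFC.log a) := by
  rw [← log_rpow_of_isStrictlyPositive ha, CFC.exp_log (a ^ t) (ha.rpow a t)]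

theorem rpow_rpow_of_isStrictlyPositive (ha : IsStrictlyPositive a) (s t : ℝ) :
    (a ^ s) ^ t = a ^ (s * t) := by
  rw [rpow_eq_exp_smul_log (ha.rpow a s), log_rpow_of_isStrictlyPositive ha, smul_smul,
    mul_comm t, rpow_eq_exp_smul_log ha]

theorem mul_rpow_of_commute (ha : IsStrictlyPositive a) (hb : IsStrictlyPositive b)
    (hab : Commute a b) (t : ℝ) : (a * b) ^ t = a ^ t * b ^ t := by
  let : NormedAlgebra ℚ R := .restrictScalars ℚ ℂ _
  have hcomm : Commute (CFC.log a) (CFC.log b) := ((hab.cfc_real _).symm.cfc_real _).symm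
  have hlog : CFC.log (a * b) = CFC.log a + CFC.log b := by
    conv_lhs => rw [← CFC.exp_log a, ← CFC.exp_log b, ← NormedSpace.exp_add_of_commute hcomm]
    exact CFC.log_exp _ (IsSelfAdjoint.log.add .log)
  rw [rpow_eq_exp_smul_log ((ha.commute_iff hb).mp hab), hlog, smul_add,
    NormedSpace.exp_add_of_commute ((hcomm.smul_left t).smul_right t), ← rpow_eq_exp_smul_log ha,
    ← rpow_eq_exp_smul_log hb]

theorem conj_rpow_of_commute (ha : IsStrictlyPositive a) (hb : IsStrictlyPositive b)
    (hab : Commute a b) (t : ℝ) : (b * a * b) ^ t = a ^ t * b ^ (2 * t) := by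
  have hbb : IsStrictlyPositive (b * b) := (hb.commute_iff hb).mp (.refl b)
  rw [← hab.eq, mul_assoc, mul_rpow_of_commute ha hbb (hab.mul_right hab),
    mul_rpow_of_commute hb hb (.refl b), two_mul, CFC.rpow_add hb.isUnit]

theorem commute_of_commute_mul_self (hb : 0 ≤ b) (h : Commute (b * b) a) : Commute b a := by
  rw [← CFC.sqrt_mul_self b]
  exact h.cfcₙ_nnreal _

theorem commute_of_commute_conj_rpow {t : ℝ} (ht : t ≠ 0) (ha : IsStrictlyPositive a)
    (hb : IsStrictlyPositive b) (h : Commute a (b * (b * a * b) ^ (t - 1) * b)) :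
    Commute a b := by
  let x := b * a * b
  have hx : IsStrictlyPositive x := by
    simpa only [hb.isSelfAdjoint.star_eq] using
      hb.isUnit.isStrictlyPositive_star_right_conjugate_iff.mpr ha
  have hxt : x ^ t = x ^ (t - 1) * x := by
    simpa [CFC.rpow_one x] using CFC.rpow_add (x := t - 1) (y := 1) hx.isUnit
  have hxt' : x ^ t = x * x ^ (t - 1) := by
    simpa [CFC.rpow_one x] using CFC.rpow_add (x := 1) (y := t - 1) hx.isUnit
  have hbb_xt : Commute (b * b) (x ^ t) := by
    refine hb.isUnit.mul_right_cancel ?_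
    calc b * b * x ^ t * b = b * (b * x ^ (t - 1) * b * a) * (b * b) := by
          rw [hxt]; simp only [x, mul_assoc]
      _ = x ^ t * (b * b) * b := by
          rw [hxt', ← h.eq]; simp only [x, mul_assoc]
  have hbb_x : Commute (b * b) x := by
    have hxinv : (x ^ t) ^ t⁻¹ = x := by
      rw [rpow_rpow_of_isStrictlyPositive hx, mul_inv_cancel₀ ht, CFC.rpow_one x]
    rw [← hxinv]
    exact (hbb_xt.symm.cfc_nnreal _).symm
  have hbx : Commute b x := commute_of_commute_mul_self hb.nonneg hbb_x
  refine hb.isUnit.mul_left_cancel (hb.isUnit.mul_right_cancel ?_)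
  simpa only [x, mul_assoc] using hbx.eq.symm

end StrictlyPositive

section ConjugationExtrema

open scoped MatrixOrder Matrix.Norms.L2Operator

variable {n : Type*} [Fintype n] {A D : Matrix n n ℂ}

theorem posDef_conj (hA : A.PosDef) (hD : D.PosDef) : (D * A * D).PosDef := by
  classical
  simpa only [star_eq_conjTranspose, hD.1.eq] using
    (Matrix.IsUnit.posDef_star_right_conjugate_iff hD.isUnit).mpr hA

variable [DecidableEq n]

theorem posDef_rpow (hA : A.PosDef) (t : ℝ) : (A ^ t).PosDef :=
  (hA.isStrictlyPositive.rpow A t).posDef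

theorem hasFDerivWithinAt_re_trace_cfc_conj {f : ℝ → ℝ} {s : Set ℝ} (hs : IsOpen s)
    (hsc : Convex ℝ s) (hf : ContDiffOn ℝ 2 f s) (hA : A.IsHermitian) (hD : D.IsHermitian)
    (hDAD : spectrum ℝ (D * A * D) ⊆ s) :
    HasFDerivWithinAt (fun B => (cfc f (D * B * D)).trace.re)
      (reTraceMul (D * cfc (deriv f) (D * A * D) * D)) {B | B.IsHermitian} A := by
  have hconj {B : Matrix n n ℂ} (hB : B.IsHermitian) : (D * B * D).IsHermitian := by
    simpa only [hD.eq] using isHermitian_mul_mul_conjTranspose D hB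
  let L : Matrix n n ℂ →L[ℝ] Matrix n n ℂ := LinearMap.toContinuousLinearMap
    (LinearMap.mulRight ℝ D ∘ₗ LinearMap.mulLeft ℝ D)
  have hgrad : (reTraceMul (cfc (deriv f) (D * A * D))).comp L =
      reTraceMul (D * cfc (deriv f) (D * A * D) * D) := by
    ext H
    change (cfc (deriv f) (D * A * D) * (D * H * D)).trace.re =
      (D * cfc (deriv f) (D * A * D) * D * H).trace.re
    rw [← mul_assoc, trace_mul_comm]
    simp only [mul_assoc]
  rw [← hgrad]
  exact (hasFDerivWithinAt_re_trace_cfc hs hsc hf (hconj hA) hDAD).comp A L.hasFDerivWithinAt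
    fun B hB => hconj hB

theorem hasFDerivWithinAt_re_trace_rpow_conj (hA : A.PosDef) (hD : D.PosDef) (z : ℝ) :
    HasFDerivWithinAt (fun B => ((D * B * D) ^ z).trace.re)
      (reTraceMul (z • (D * (D * A * D) ^ (z - 1) * D))) (unitaryOrbit A) A := by
  have hpos {B : Matrix n n ℂ} (hB : B ∈ unitaryOrbit A) : IsStrictlyPositive (D * B * D) :=
    (posDef_conj (posDef_of_mem_unitaryOrbit hA hB) hD).isStrictlyPositive
  have hA' := hpos (mem_unitaryOrbit_self A)
  have hderiv : cfc (deriv fun x : ℝ => x ^ z) (D * A * D) = z • (D * A * D) ^ (z - 1) := by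
    rw [CFC.rpow_eq_cfc_real, ← cfc_const_mul z _ _ (finite_real_spectrum.continuousOn _)]
    exact cfc_congr fun x _ => Real.deriv_rpow_const x z
  have h := hasFDerivWithinAt_re_trace_cfc_conj (f := fun x => x ^ z) isOpen_Ioi (convex_Ioi 0)
    (fun x hx => (Real.contDiffAt_rpow_const_of_ne (ne_of_gt hx)).contDiffWithinAt) hA.1 hD.1
    fun x hx => hA'.spectrum_pos hx
  rw [hderiv, mul_smul_comm, smul_mul_assoc] at h
  refine (h.mono fun B hB => isHermitian_of_mem_unitaryOrbit hA.1 hB).congr (fun B hB => ?_) ?_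
  · rw [CFC.rpow_eq_cfc_real (hpos hB).nonneg]
  · rw [CFC.rpow_eq_cfc_real hA'.nonneg]

theorem commute_of_isExtrOn_re_trace_rpow_conj (hA : A.PosDef) (hD : D.PosDef) {z : ℝ} (hz : z ≠ 0)
    (hext : IsExtrOn (fun B => ((D * B * D) ^ z).trace.re) (unitaryOrbit A) A) : Commute A D := by
  have hgrad := posDef_conj (posDef_rpow (posDef_conj hA hD) (z - 1)) hD
  have hcomm : Commute A (z • (D * (D * A * D) ^ (z - 1) * D)) :=
    commute_of_isExtrOn_unitaryOrbit hA.1 (IsSelfAdjoint.smul (.all z) hgrad.1)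
      (hasFDerivWithinAt_re_trace_rpow_conj hA hD z) hext
  exact commute_of_commute_conj_rpow hz hA.isStrictlyPositive hD.isStrictlyPositive
    ((Commute.smul_right_iff₀ hz).mp hcomm)

theorem continuousOn_re_trace_rpow_conj (hA : A.PosDef) (hD : D.PosDef) (z : ℝ) :
    ContinuousOn (fun B => ((D * B * D) ^ z).trace.re) (unitaryOrbit A) := by
  intro B hB
  rw [← unitaryOrbit_eq_of_mem hB]
  exact (hasFDerivWithinAt_re_trace_rpow_conj (posDef_of_mem_unitaryOrbit hA hB) hD
    z).continuousWithinAt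

theorem re_trace_rpow_conj_mem_Icc (hA : A.PosDef) (hD : D.PosDef) {z a b : ℝ} (hz : z ≠ 0)
    (hcomm : ∀ B ∈ unitaryOrbit A, Commute B D → ((D * B * D) ^ z).trace.re ∈ Set.Icc a b) :
    ∀ B ∈ unitaryOrbit A, ((D * B * D) ^ z).trace.re ∈ Set.Icc a b := by
  have hcommute {C : Matrix n n ℂ} (hC : C ∈ unitaryOrbit A)
      (hext : IsExtrOn (fun B => ((D * B * D) ^ z).trace.re) (unitaryOrbit A) C) : Commute C D :=
    commute_of_isExtrOn_re_trace_rpow_conj (posDef_of_mem_unitaryOrbit hA hC) hD hz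
      (by rwa [unitaryOrbit_eq_of_mem hC])
  have hcont := continuousOn_re_trace_rpow_conj hA hD z
  obtain ⟨C, hC, hmin⟩ :=
    (isCompact_unitaryOrbit A).exists_isMinOn ⟨A, mem_unitaryOrbit_self A⟩ hcont
  obtain ⟨C', hC', hmax⟩ :=
    (isCompact_unitaryOrbit A).exists_isMaxOn ⟨A, mem_unitaryOrbit_self A⟩ hcont
  exact fun B hB => ⟨(hcomm C hC (hcommute hC (.inl hmin))).1.trans (hmin hB),
    (hmax hB).trans (hcomm C' hC' (hcommute hC' (.inr hmax))).2⟩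

end ConjugationExtrema

section FidelityRange

open scoped MatrixOrder Matrix.Norms.L2Operator

variable {n : Type*} [Fintype n] [DecidableEq n] {A B : Matrix n n ℂ}

theorem image_rpow_unitaryOrbit (hA : A.PosDef) (t : ℝ) :
    (· ^ t) '' unitaryOrbit A = unitaryOrbit (A ^ t) := by
  rw [CFC.rpow_eq_cfc_real hA.posSemidef.nonneg, ← image_cfc_unitaryOrbit _ hA.1]
  exact Set.image_congr fun C hC =>
    CFC.rpow_eq_cfc_real (posDef_of_mem_unitaryOrbit hA hC).posSemidef.nonneg

theorem re_trace_rpow_mul_rpow (hA : A.PosDef) (hB : B.PosDef) (p q : ℝ) :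
    (A ^ p * B ^ q).trace.re =
      RCLike.re (cfc (fun x : ℝ => x ^ p) A * cfc (fun x : ℝ => x ^ q) B).trace := by
  rw [CFC.rpow_eq_cfc_real hA.posSemidef.nonneg, CFC.rpow_eq_cfc_real hB.posSemidef.nonneg]
  rfl

theorem re_trace_conj_rpow_of_commute (hA : A.PosDef) (hB : B.PosDef) {r s : ℝ}
    (h : Commute (A ^ r) (B ^ s)) (z : ℝ) :
    ((B ^ s * A ^ r * B ^ s) ^ z).trace.re = (A ^ (r * z) * B ^ (s * (2 * z))).trace.re := by
  rw [conj_rpow_of_commute (posDef_rpow hA r).isStrictlyPositive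
    (posDef_rpow hB s).isStrictlyPositive h,
    rpow_rpow_of_isStrictlyPositive hA.isStrictlyPositive,
    rpow_rpow_of_isStrictlyPositive hB.isStrictlyPositive]

theorem exists_re_trace_conj_rpow_eq (hA : A.PosDef) (hB : B.PosDef) (r s z : ℝ)
    (e e' : Equiv.Perm n) :
    ∃ C ∈ unitaryOrbit A, ((B ^ s * C ^ r * B ^ s) ^ z).trace.re =
      ∑ i, hA.1.eigenvalues (e i) ^ (r * z) * hB.1.eigenvalues (e' i) ^ (s * (2 * z)) := by
  obtain ⟨C, hC, hCB, htrace⟩ := exists_commute_re_trace_cfc_mul_cfc_eq hA.1 hB.1 e e'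
  have hCpos := posDef_of_mem_unitaryOrbit hA hC
  have hcomm : Commute (C ^ r) (B ^ s) := ((hCB.cfc_nnreal _).symm.cfc_nnreal _).symm
  refine ⟨C, hC, ?_⟩
  rw [re_trace_conj_rpow_of_commute hCpos hB hcomm, re_trace_rpow_mul_rpow hCpos hB, htrace]

theorem re_trace_conj_rpow_mem_Icc (hA : A.PosDef) (hB : B.PosDef) {r s z : ℝ} (hz : z ≠ 0)
    (e u v : Equiv.Perm n)
    (hu : Antivary (fun i => hA.1.eigenvalues (e i) ^ (r * z))
      (fun i => hB.1.eigenvalues (u i) ^ (s * (2 * z))))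
    (hv : Monovary (fun i => hA.1.eigenvalues (e i) ^ (r * z))
      (fun i => hB.1.eigenvalues (v i) ^ (s * (2 * z)))) :
    ∀ C ∈ unitaryOrbit A, ((B ^ s * C ^ r * B ^ s) ^ z).trace.re ∈
      Set.Icc (∑ i, hA.1.eigenvalues (e i) ^ (r * z) * hB.1.eigenvalues (u i) ^ (s * (2 * z)))
        (∑ i, hA.1.eigenvalues (e i) ^ (r * z) * hB.1.eigenvalues (v i) ^ (s * (2 * z))) := by
  suffices ∀ X ∈ unitaryOrbit (A ^ r), ((B ^ s * X * B ^ s) ^ z).trace.re ∈ Set.Icc _ _ from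
    fun C hC => this _ (image_rpow_unitaryOrbit hA r ▸ Set.mem_image_of_mem _ hC)
  refine re_trace_rpow_conj_mem_Icc (posDef_rpow hA r) (posDef_rpow hB s) hz ?_
  rw [← image_rpow_unitaryOrbit hA]
  rintro _ ⟨C, hC, rfl⟩ hcomm
  have hCpos := posDef_of_mem_unitaryOrbit hA hC
  rw [← eigenvalues_eq_of_mem_unitaryOrbit hA.1 hCpos.1 hC] at hu hv ⊢
  rw [re_trace_conj_rpow_of_commute hCpos hB hcomm, re_trace_rpow_mul_rpow hCpos hB]
  let f (x : ℝ) : ℝ := x ^ (r * z)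
  let g (x : ℝ) : ℝ := x ^ (s * (2 * z))
  exact ⟨le_re_trace_cfc_mul_cfc_of_antivary (f := f) (g := g) hCpos.1 hB.1 e u hu,
    re_trace_cfc_mul_cfc_le_of_monovary (f := f) (g := g) hCpos.1 hB.1 e v hv⟩

theorem image_re_trace_conj_rpow_unitaryOrbit (hA : A.PosDef) (hB : B.PosDef) {r s z : ℝ}
    (hz : z ≠ 0) (e u v : Equiv.Perm n)
    (hu : Antivary (fun i => hA.1.eigenvalues (e i) ^ (r * z))
      (fun i => hB.1.eigenvalues (u i) ^ (s * (2 * z))))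
    (hv : Monovary (fun i => hA.1.eigenvalues (e i) ^ (r * z))
      (fun i => hB.1.eigenvalues (v i) ^ (s * (2 * z)))) :
    (fun C => ((B ^ s * C ^ r * B ^ s) ^ z).trace.re) '' unitaryOrbit A =
      Set.Icc (∑ i, hA.1.eigenvalues (e i) ^ (r * z) * hB.1.eigenvalues (u i) ^ (s * (2 * z)))
        (∑ i, hA.1.eigenvalues (e i) ^ (r * z) * hB.1.eigenvalues (v i) ^ (s * (2 * z))) := by
  have hconn : IsPreconnected
      ((fun C => ((B ^ s * C ^ r * B ^ s) ^ z).trace.re) '' unitaryOrbit A) := by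
    have h := (isPathConnected_unitaryOrbit (A ^ r)).isConnected.isPreconnected.image _
      (continuousOn_re_trace_rpow_conj (posDef_rpow hA r) (posDef_rpow hB s) z)
    rwa [← image_rpow_unitaryOrbit hA, Set.image_image] at h
  refine Set.Subset.antisymm ?_ (hconn.Icc_subset ?_ ?_)
  · exact Set.image_subset_iff.mpr (re_trace_conj_rpow_mem_Icc hA hB hz e u v hu hv)
  · exact exists_re_trace_conj_rpow_eq hA hB r s z e u
  · exact exists_re_trace_conj_rpow_eq hA hB r s z e v

variable {d : ℕ} {ρ σ : Matrix (Fin d) (Fin d) ℂ}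

theorem mpow_eq_cfc (hρ : ρ.IsHermitian) (t : ℝ) : mpow ρ t = cfc (fun x : ℝ => x ^ t) ρ := by
  rw [mpow, dif_pos hρ, hρ.cfc_eq, IsHermitian.cfc, Unitary.conjStarAlgAut_apply]
  rfl

theorem isHermitian_mpow (hρ : ρ.IsHermitian) (t : ℝ) : (mpow ρ t).IsHermitian :=
  mpow_eq_cfc hρ t ▸ cfc_predicate _ ρ

theorem mpow_conjStarAlgAut (U : unitaryGroup (Fin d) ℂ) (hρ : ρ.IsHermitian) (t : ℝ) :
    mpow (Unitary.conjStarAlgAut ℂ _ U ρ) t = Unitary.conjStarAlgAut ℂ _ U (mpow ρ t) := by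
  rw [mpow_eq_cfc (isHermitian_of_mem_unitaryOrbit hρ (conj_mem_unitaryOrbit ρ U)),
    mpow_eq_cfc hρ, cfc_conjStarAlgAut _ hρ]

theorem Faz_conjStarAlgAut (U : unitaryGroup (Fin d) ℂ) (hρ : ρ.IsHermitian) (hσ : σ.IsHermitian)
    (α z : ℝ) :
    Faz (Unitary.conjStarAlgAut ℂ _ U ρ) (Unitary.conjStarAlgAut ℂ _ U σ) α z = Faz ρ σ α z := by
  have hsandwich (s r : ℝ) : (mpow σ s * mpow ρ r * mpow σ s).IsHermitian := by
    simpa only [(isHermitian_mpow hσ s).eq] using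
      isHermitian_mul_mul_conjTranspose (mpow σ s) (isHermitian_mpow hρ r)
  simp only [Faz, mpow_conjStarAlgAut U hρ, mpow_conjStarAlgAut U hσ, ← map_mul,
    mpow_conjStarAlgAut U (hsandwich _ _), trace_conjStarAlgAut]

theorem setOf_Faz_conj_eq_image (hρ : ρ.IsHermitian) (hσ : σ.IsHermitian) (α z : ℝ) :
    {x | ∃ U ∈ unitaryGroup (Fin d) ℂ, x = Faz ρ (U * σ * star U) α z} =
      (fun τ => Faz τ σ α z) '' unitaryOrbit ρ := by
  have hmove (U : unitaryGroup (Fin d) ℂ) :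
      Faz ρ (Unitary.conjStarAlgAut ℂ _ U σ) α z =
        Faz (Unitary.conjStarAlgAut ℂ _ U⁻¹ ρ) σ α z := by
    rw [← Faz_conjStarAlgAut U (isHermitian_of_mem_unitaryOrbit hρ (conj_mem_unitaryOrbit ρ _)) hσ,
      ← StarAlgEquiv.mul_apply, ← map_mul, mul_inv_cancel, map_one, StarAlgEquiv.one_apply]
  ext x
  constructor
  · rintro ⟨U, hU, rfl⟩
    exact ⟨_, conj_mem_unitaryOrbit ρ (⟨U, hU⟩⁻¹), (hmove ⟨U, hU⟩).symm⟩
  · rintro ⟨_, ⟨U, rfl⟩, rfl⟩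
    exact ⟨_, (U⁻¹).2, ((hmove U⁻¹).trans (by rw [inv_inv])).symm⟩

theorem Faz_eq_re_trace_rpow (hρ : ρ.PosDef) (hσ : σ.PosDef) (α z : ℝ) :
    Faz ρ σ α z =
      ((σ ^ ((1 - α) / (2 * z)) * ρ ^ (α / z) * σ ^ ((1 - α) / (2 * z))) ^ z).trace.re ^
        (1 / α) := by
  have mpow_eq {τ : Matrix (Fin d) (Fin d) ℂ} (hτ : τ.PosDef) (t : ℝ) : mpow τ t = τ ^ t := by
    rw [mpow_eq_cfc hτ.1, CFC.rpow_eq_cfc_real hτ.posSemidef.nonneg]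
  rw [Faz, mpow_eq hσ, mpow_eq hρ, mpow_eq]
  exact posDef_conj (posDef_rpow hρ _) (posDef_rpow hσ _)

theorem sortUp_monotone (p : Fin d → ℝ) : Monotone (sortUp p) := Tuple.monotone_sort p

theorem sortDown_antitone (p : Fin d → ℝ) : Antitone (sortDown p) :=
  (sortUp_monotone p).comp_antitone Fin.rev_anti

theorem image_rpow_Icc {a b t : ℝ} (ha : 0 ≤ a) (hab : a ≤ b) (ht : 0 ≤ t) :
    (· ^ t) '' Set.Icc a b = Set.Icc (a ^ t) (b ^ t) := by
  have hmono : MonotoneOn (fun x : ℝ => x ^ t) (Set.Icc a b) :=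
    (Real.monotoneOn_rpow_Ici_of_exponent_nonneg ht).mono fun x hx => ha.trans hx.1
  exact (Real.continuous_rpow_const ht).continuousOn.image_Icc_of_monotoneOn hab hmono

theorem antitone_eigDown_rpow (hρ : ρ.PosDef) {t : ℝ} (ht : 0 ≤ t) :
    Antitone fun i => eigDown hρ.1 i ^ t := fun _ _ hij =>
  Real.rpow_le_rpow (hρ.eigenvalues_pos _).le (sortDown_antitone _ hij) ht

theorem monotone_eigDown_rpow_of_nonpos (hρ : ρ.PosDef) {t : ℝ} (ht : t ≤ 0) :
    Monotone fun i => eigDown hρ.1 i ^ t := fun _ _ hij =>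
  Real.rpow_le_rpow_of_nonpos (hρ.eigenvalues_pos _) (sortDown_antitone _ hij) ht

theorem antitone_eigUp_rpow_of_nonpos (hρ : ρ.PosDef) {t : ℝ} (ht : t ≤ 0) :
    Antitone fun i => eigUp hρ.1 i ^ t := fun _ _ hij =>
  Real.rpow_le_rpow_of_nonpos (hρ.eigenvalues_pos _) (sortUp_monotone _ hij) ht

theorem image_re_trace_conj_rpow_unitaryOrbit_eq_Icc_eigDown (hρ : ρ.PosDef) (hσ : σ.PosDef)
    {α z : ℝ} (hα : 1 ≤ α) (hz : z ≠ 0) :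
    (fun τ => ((σ ^ ((1 - α) / (2 * z)) * τ ^ (α / z) * σ ^ ((1 - α) / (2 * z))) ^ z).trace.re) ''
        unitaryOrbit ρ =
      Set.Icc (∑ i, eigDown hρ.1 i ^ α * eigDown hσ.1 i ^ (1 - α))
        (∑ i, eigDown hρ.1 i ^ α * eigUp hσ.1 i ^ (1 - α)) := by
  have h := image_re_trace_conj_rpow_unitaryOrbit (r := α / z) (s := (1 - α) / (2 * z)) hρ hσ hz
    (Fin.revPerm.trans (Tuple.sort hρ.1.eigenvalues))
    (Fin.revPerm.trans (Tuple.sort hσ.1.eigenvalues)) (Tuple.sort hσ.1.eigenvalues)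
  rw [div_mul_cancel₀ α hz, div_mul_cancel₀ _ (by simpa)] at h
  have hρα := antitone_eigDown_rpow hρ (zero_le_one.trans hα)
  have hα' : 1 - α ≤ 0 := sub_nonpos.mpr hα
  exact h (hρα.antivary (monotone_eigDown_rpow_of_nonpos hσ hα'))
    (hρα.monovary (antitone_eigUp_rpow_of_nonpos hσ hα'))

end FidelityRange

theorem stmt_5_general {d : ℕ} {ρ σ : Matrix (Fin d) (Fin d) ℂ} (hρ : ρ.PosDef) (hσ : σ.PosDef)
    {α z : ℝ} (hα : 1 ≤ α) (hz : z ≠ 0) :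
    {x : ℝ | ∃ U ∈ unitaryGroup (Fin d) ℂ, x = Faz ρ (U * σ * star U) α z} =
      Set.Icc (FazC (eigDown hρ.1) (eigDown hσ.1) α) (FazC (eigDown hρ.1) (eigUp hσ.1) α) := by
  have hrange := image_re_trace_conj_rpow_unitaryOrbit_eq_Icc_eigDown hρ hσ hα hz
  have hle : ∑ i, eigDown hρ.1 i ^ α * eigDown hσ.1 i ^ (1 - α) ≤
      ∑ i, eigDown hρ.1 i ^ α * eigUp hσ.1 i ^ (1 - α) :=
    Set.nonempty_Icc.mp (hrange ▸ (isPathConnected_unitaryOrbit ρ).nonempty.image _)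
  have hnonneg : 0 ≤ ∑ i, eigDown hρ.1 i ^ α * eigDown hσ.1 i ^ (1 - α) :=
    Finset.sum_nonneg fun i _ => mul_nonneg (Real.rpow_nonneg (hρ.eigenvalues_pos _).le _)
      (Real.rpow_nonneg (hσ.eigenvalues_pos _).le _)
  have hFaz : (fun τ => Faz τ σ α z) '' unitaryOrbit ρ = _ :=
    Set.image_congr fun τ hτ => Faz_eq_re_trace_rpow (posDef_of_mem_unitaryOrbit hρ hτ) hσ α z
  rw [setOf_Faz_conj_eq_image hρ.1 hσ.1, hFaz, ← Set.image_image (· ^ (1 / α)), hrange,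
    image_rpow_Icc hnonneg hle (by positivity)]
  rfl

/-- for positive definite density matrices `ρ, σ` and `(α,z)` with
`1 < α ≤ 2, α/2 ≤ z ≤ α` or `2 ≤ α, α−1 ≤ z ≤ α`, the set of values `F_{α,z}(ρ, UσU*)`
over unitaries `U` is exactly `[F_α^C(λ↓(ρ),λ↓(σ)), F_α^C(λ↓(ρ),λ↑(σ))]`. -/
theorem stmt_5 {d : ℕ} (ρ σ : Matrix (Fin d) (Fin d) ℂ)
    (hρ : ρ.PosDef) (hσ : σ.PosDef) (hρ1 : ρ.trace = 1) (hσ1 : σ.trace = 1)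
    (α z : ℝ)
    (hαz : (1 < α ∧ α ≤ 2 ∧ α / 2 ≤ z ∧ z ≤ α) ∨ (2 ≤ α ∧ α - 1 ≤ z ∧ z ≤ α)) :
    {x : ℝ | ∃ U ∈ Matrix.unitaryGroup (Fin d) ℂ, x = Faz ρ (U * σ * star U) α z}
      = Set.Icc (FazC (eigDown hρ.1) (eigDown hσ.1) α)
          (FazC (eigDown hρ.1) (eigUp hσ.1) α) := by
  obtain ⟨hα, hz⟩ : 1 ≤ α ∧ z ≠ 0 := by
    rcases hαz with ⟨h₁, -, h₂, -⟩ | ⟨h₁, h₂, -⟩ <;> constructor <;> linarith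
  exact stmt_5_general hρ hσ hα hz
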